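/- arXiv:1201.4867 — 2 statements merged into one kernel-verified Lean document; each statement's English description precedes it below -/
import Mathlib

section
/- A function B : G × G → ℂ taking only nonzero values is bilinear if and only if there exists an additive group endomorphism ϖ : G →+ G such that B(g,h) = χ_{ϖ(g)}(h) for all g, h ∈ G; moreover, when such an endomorphism exists it is unique. -/
/-- The character `χ_g` of the finite abelian group `G = ∀ i, ZMod (d i)`. -/
noncomputable def chi {m : ℕ} {d : Fin m → ℕ} (g h : ∀ i, ZMod (d i)) : ℂ :=
  Complex.exp (2 * Real.pi * Complex.I *
    ∑ i, ((g i).val : ℂ) * ((h i).val : ℂ) / ((d i : ℕ) : ℂ))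

/-!
The product ring `R = ∀ i, ZMod (d i)` has a primitive additive character `ψ`, the product of the
standard characters of its factors, and `χ_g(h) = ψ (g * h)`. Primitivity says that `g ↦ χ_g`
embeds `R` into its group of characters; that group has at most `|R|` elements because distinct
characters are linearly independent, so `g ↦ χ_g` is an isomorphism. A nowhere-zero bilinear `B`
is a homomorphism `g ↦ B(g, ·)` into the group of characters, and `ϖ` is this homomorphism read
through the isomorphism.
-/

section Bilinear

variable {A A' M : Type*} [AddMonoid A] [AddMonoid A'] [CommMonoidWithZero M] [IsCancelMulZero M]

lemma map_zero_eq_one_of_map_add_eq_mul {f : A → M} (hf0 : f 0 ≠ 0)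
    (hf : ∀ a b, f (a + b) = f a * f b) : f 0 = 1 :=
  (mul_eq_left₀ hf0).1 <| by rw [← hf, add_zero]

theorem bilinear_iff_exists_addMonoidHom_addChar {B : A × A' → M} (hB0 : ∀ p, B p ≠ 0) :
    ((∀ a b x, B (a + b, x) = B (a, x) * B (b, x)) ∧
        ∀ x y a, B (a, x + y) = B (a, x) * B (a, y)) ↔
      ∃ Φ : A →+ AddChar A' M, ∀ a x, B (a, x) = Φ a x := by
  constructor
  · rintro ⟨hleft, hright⟩
    let Φ : A →+ AddChar A' M :=
      { toFun a :=
          { toFun x := B (a, x)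
            map_zero_eq_one' := map_zero_eq_one_of_map_add_eq_mul (f := fun x ↦ B (a, x)) (hB0 _)
              (hright · · a)
            map_add_eq_mul' := (hright · · a) }
        map_zero' := AddChar.ext _ _ fun x ↦
          map_zero_eq_one_of_map_add_eq_mul (f := fun a ↦ B (a, x)) (hB0 _) (hleft · · x)
        map_add' a b := AddChar.ext _ _ (hleft a b) }
    exact ⟨Φ, fun _ _ ↦ rfl⟩
  · rintro ⟨Φ, hΦ⟩
    simp only [hΦ, map_add, AddChar.add_apply, AddChar.map_add_eq_mul, implies_true, and_self]

end Bilinear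

section Card

variable (A K : Type*) [AddMonoid A] [CommRing K] [IsDomain K]

lemma linearIndependent_addChar : LinearIndependent K (fun ψ : AddChar A K ↦ (ψ : A → K)) :=
  (linearIndependent_monoidHom (Multiplicative A) K).comp _ AddChar.toMonoidHomEquiv.injective

lemma finite_addChar [Finite A] : Finite (AddChar A K) :=
  (linearIndependent_addChar A K).finite

lemma natCard_addChar_le [Finite A] : Nat.card (AddChar A K) ≤ Nat.card A := by
  have := Fintype.ofFinite A
  have := finite_addChar A K
  have := Fintype.ofFinite (AddChar A K)
  simpa only [Module.finrank_fintype_fun_eq_card, Nat.card_eq_fintype_card] using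
    (linearIndependent_addChar A K).fintype_card_le_finrank

end Card

section Primitive

variable {R K : Type*} [CommRing R] [Finite R] [CommRing K] [IsDomain K] {ψ : AddChar R K}

lemma mulShift_bijective_of_isPrimitive (hψ : ψ.IsPrimitive) : Function.Bijective ψ.mulShift :=
  have := finite_addChar R K
  (AddChar.to_mulShift_inj_of_isPrimitive hψ).bijective_of_nat_card_le (natCard_addChar_le R K)

/-- A primitive additive character `ψ` identifies a finite ring with its group of characters,
`r` corresponding to `x ↦ ψ (r * x)`. -/
noncomputable def mulShiftAddEquiv (hψ : ψ.IsPrimitive) : R ≃+ AddChar R K :=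
  .ofBijective (⟨⟨ψ.mulShift, ψ.mulShift_zero⟩, fun r s ↦ (ψ.mulShift_mul r s).symm⟩ :
    R →+ AddChar R K) (mulShift_bijective_of_isPrimitive hψ)

lemma mulShiftAddEquiv_apply_apply (hψ : ψ.IsPrimitive) (r x : R) :
    mulShiftAddEquiv hψ r x = ψ (r * x) := rfl

theorem stmt_5_general {A : Type*} [AddMonoid A] (hψ : ψ.IsPrimitive) {B : A × R → K}
    (hB0 : ∀ p, B p ≠ 0) :
    (((∀ a b x, B (a + b, x) = B (a, x) * B (b, x)) ∧
        ∀ x y a, B (a, x + y) = B (a, x) * B (a, y)) ↔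
      ∃ ϖ : A →+ R, ∀ a x, B (a, x) = ψ (ϖ a * x)) ∧
    ∀ ϖ ϖ' : A →+ R, (∀ a x, B (a, x) = ψ (ϖ a * x)) →
      (∀ a x, B (a, x) = ψ (ϖ' a * x)) → ϖ = ϖ' := by
  constructor
  · rw [bilinear_iff_exists_addMonoidHom_addChar hB0,
      ← (mulShiftAddEquiv hψ).addMonoidHomCongrRightEquiv.exists_congr_right]
    simp only [AddEquiv.addMonoidHomCongrRightEquiv_apply, AddMonoidHom.coe_comp,
      AddEquiv.coe_toAddMonoidHom, Function.comp_apply, mulShiftAddEquiv_apply_apply]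
  · intro ϖ ϖ' h h'
    ext a
    refine (mulShiftAddEquiv hψ).injective (AddChar.ext _ _ fun x ↦ ?_)
    rw [mulShiftAddEquiv_apply_apply, mulShiftAddEquiv_apply_apply, ← h, ← h']

end Primitive

section Pi

variable {ι M : Type*} [Fintype ι] {R : ι → Type*} [CommMonoid M]

/-- The character `x ↦ ∏ i, ψ i (x i)` of a finite product; on a product of rings it supplies a
primitive character from primitive characters of the factors. -/
def piAddChar [∀ i, AddMonoid (R i)] (ψ : ∀ i, AddChar (R i) M) : AddChar (∀ i, R i) M :=
  ∏ i, (ψ i).compAddMonoidHom (Pi.evalAddMonoidHom R i)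

lemma piAddChar_apply [∀ i, AddMonoid (R i)] (ψ : ∀ i, AddChar (R i) M) (x : ∀ i, R i) :
    piAddChar ψ x = ∏ i, ψ i (x i) :=
  AddChar.prod_apply _ _ x

lemma piAddChar_single [DecidableEq ι] [∀ i, AddMonoid (R i)] (ψ : ∀ i, AddChar (R i) M) (i : ι)
    (x : R i) : piAddChar ψ (Pi.single i x) = ψ i x := by
  have hne (j : ι) (hj : j ≠ i) : ψ j (Pi.single i x j) = 1 := by
    rw [Pi.single_eq_of_ne hj, AddChar.map_zero_eq_one]
  rw [piAddChar_apply, Fintype.prod_eq_single i hne, Pi.single_eq_same]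

theorem isPrimitive_piAddChar [∀ i, CommRing (R i)] {ψ : ∀ i, AddChar (R i) M}
    (hψ : ∀ i, (ψ i).IsPrimitive) : (piAddChar ψ).IsPrimitive := by
  classical
  intro a ha
  obtain ⟨i, hi⟩ := Function.ne_iff.1 ha
  obtain ⟨x, hx⟩ := AddChar.ne_one_iff.1 (hψ i hi)
  refine AddChar.ne_one_iff.2 ⟨Pi.single i x, ?_⟩
  rwa [AddChar.mulShift_apply, ← Pi.single_mul_right, piAddChar_single]

end Pi

lemma stdAddChar_mul_eq_exp {n : ℕ} [NeZero n] (a b : ZMod n) :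
    ZMod.stdAddChar (a * b) = Complex.exp (2 * Real.pi * Complex.I * (a.val * b.val / n)) := by
  have hab : a * b = ((a.val * b.val : ℤ) : ZMod n) := by simp
  rw [hab, ZMod.stdAddChar_coe]
  push_cast
  rw [mul_div_assoc]

lemma chi_eq_piAddChar_mul {m : ℕ} {d : Fin m → ℕ} [∀ i, NeZero (d i)] (g h : ∀ i, ZMod (d i)) :
    chi g h = piAddChar (fun _ ↦ ZMod.stdAddChar) (g * h) := by
  simp only [chi, Finset.mul_sum, Complex.exp_sum, piAddChar_apply, Pi.mul_apply,
    stdAddChar_mul_eq_exp]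

/-- A nowhere-zero function `B : G × G → ℂ` is bilinear iff `B(g,h) = χ_{ϖ(g)}(h)` for a
(unique) additive endomorphism `ϖ` of `G`. -/
theorem stmt_5 (m : ℕ) (hm : 0 < m) (d : Fin m → ℕ) [∀ i, NeZero (d i)]
    (B : (∀ i, ZMod (d i)) × (∀ i, ZMod (d i)) → ℂ) (hB0 : ∀ p, B p ≠ 0) :
    ((∀ g h x : ∀ i, ZMod (d i),
        B (g + h, x) = B (g, x) * B (h, x) ∧ B (x, g + h) = B (x, g) * B (x, h)) ↔
      ∃ ϖ : (∀ i, ZMod (d i)) →+ (∀ i, ZMod (d i)), ∀ g h, B (g, h) = chi (ϖ g) h) ∧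
    ∀ ϖ ϖ' : (∀ i, ZMod (d i)) →+ (∀ i, ZMod (d i)),
      (∀ g h, B (g, h) = chi (ϖ g) h) → (∀ g h, B (g, h) = chi (ϖ' g) h) → ϖ = ϖ' := by
  have hψ := isPrimitive_piAddChar fun i ↦ ZMod.isPrimitive_stdAddChar (d i)
  simpa only [chi_eq_piAddChar_mul, forall_and] using stmt_5_general hψ hB0
end

section
/- Let α : G ≃+ G be an additive automorphism of G and let U_α ∈ Matrix G G ℂ be the permutation matrix with (U_α)_{h,k} = 1 if h = α(k) and 0 otherwise. Then for every g ∈ G: U_α·X(g)·U_αᴴ = X(α(g)); moreover, if β : G →+ G is an additive endomorphism satisfying χ_{β(g)}(h) = χ_g(α⁻¹(h)) for all g, h ∈ G (the dual endomorphism of α⁻¹), then U_α·Z(g)·U_αᴴ = Z(β(g)) for every g ∈ G. -/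
open scoped Matrix

/-- The Pauli `X`-type matrix: `X(g)_{h,k} = 1` if `h = k + g`, else `0`. -/
noncomputable def Xop {m : ℕ} {d : Fin m → ℕ} (g : ∀ i, ZMod (d i)) :
    Matrix (∀ i, ZMod (d i)) (∀ i, ZMod (d i)) ℂ :=
  Matrix.of fun h k => if h = k + g then (1 : ℂ) else 0

/-- The Pauli `Z`-type matrix: the diagonal matrix with entries `χ_g(h)`. -/
noncomputable def Zop {m : ℕ} {d : Fin m → ℕ} (g : ∀ i, ZMod (d i)) :
    Matrix (∀ i, ZMod (d i)) (∀ i, ZMod (d i)) ℂ :=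
  Matrix.diagonal fun h => chi g h

/-!
Conjugating a matrix by a permutation matrix only relabels its rows and columns. Relabelling along
`α⁻¹` turns the condition `α⁻¹ h = α⁻¹ k + g`, which cuts out the support of `X(g)`, into
`h = k + α g`, and turns the diagonal `χ_g` of `Z(g)` into `χ_g ∘ α⁻¹`.
-/

section PermutationMatrix

variable {l m n R : Type*} [DecidableEq m]

theorem conjTranspose_toMatrix_pequiv [DecidableEq n] [NonAssocSemiring R] [StarRing R]
    (f : m ≃. n) : (f.toMatrix : Matrix m n R)ᴴ = f.symm.toMatrix := by
  rw [Matrix.conjTranspose, ← PEquiv.toMatrix_symm]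
  ext i j
  simp only [Matrix.map_apply, PEquiv.toMatrix_apply, apply_ite star, star_one, star_zero]

theorem toMatrix_toPEquiv_mul_mul_conjTranspose [Fintype m] [NonAssocSemiring R] [StarRing R]
    (e : l ≃ m) (M : Matrix m m R) :
    (e.toPEquiv.toMatrix : Matrix l m R) * M * (e.toPEquiv.toMatrix : Matrix l m R)ᴴ =
      M.submatrix e e := by
  classical
  rw [conjTranspose_toMatrix_pequiv, ← Equiv.toPEquiv_symm, PEquiv.toMatrix_toPEquiv_mul,
    PEquiv.mul_toMatrix_toPEquiv, Matrix.submatrix_submatrix, Equiv.symm_symm,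
    Function.comp_id, Function.id_comp]

theorem toMatrix_toPEquiv_symm_apply_eq_ite [DecidableEq n] [Zero R] [One R] (e : m ≃ n)
    (i : n) (j : m) :
    (e.symm.toPEquiv.toMatrix : Matrix n m R) i j = if i = e j then 1 else 0 := by
  simp only [PEquiv.toMatrix_apply, Equiv.toPEquiv_apply, Option.mem_def, Option.some_inj,
    Equiv.symm_apply_eq]

end PermutationMatrix

section PauliMatrix

variable {m m' : ℕ} {d : Fin m → ℕ} {d' : Fin m' → ℕ}

theorem Xop_submatrix_symm (α : (∀ i, ZMod (d i)) ≃+ (∀ i, ZMod (d' i))) (g : ∀ i, ZMod (d i)) :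
    (Xop g).submatrix α.symm α.symm = Xop (α g) := by
  ext h k
  have shift_iff : α.symm h = α.symm k + g ↔ h = k + α g := by
    rw [AddEquiv.symm_apply_eq, map_add, AddEquiv.apply_symm_apply]
  simp only [Xop, Matrix.submatrix_apply, Matrix.of_apply, shift_iff]

theorem Zop_submatrix {f : (∀ i, ZMod (d' i)) → (∀ i, ZMod (d i))} (hf : f.Injective)
    {g : ∀ i, ZMod (d i)} {g' : ∀ i, ZMod (d' i)} (hg : ∀ h, chi g' h = chi g (f h)) :
    (Zop g).submatrix f f = Zop g' := by
  rw [Zop, Matrix.submatrix_diagonal _ _ hf, Zop, funext hg, Function.comp_def]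

theorem stmt_12_general [∀ i, NeZero (d i)]
    (α : (∀ i, ZMod (d i)) ≃+ (∀ i, ZMod (d' i)))
    (U : Matrix (∀ i, ZMod (d' i)) (∀ i, ZMod (d i)) ℂ)
    (hU : ∀ h k, U h k = if h = α k then (1 : ℂ) else 0) :
    (∀ g, U * Xop g * Uᴴ = Xop (α g)) ∧
    ∀ g g', (∀ h, chi g' h = chi g (α.symm h)) → U * Zop g * Uᴴ = Zop g' := by
  obtain rfl : U = α.symm.toEquiv.toPEquiv.toMatrix := by
    ext h k
    rw [hU]
    exact (toMatrix_toPEquiv_symm_apply_eq_ite α.toEquiv h k).symm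
  simp only [toMatrix_toPEquiv_mul_mul_conjTranspose]
  exact ⟨Xop_submatrix_symm α, fun _ _ hg => Zop_submatrix α.symm.injective hg⟩

end PauliMatrix

/-- Conjugation of `X(g)` and `Z(g)` by the permutation matrix `U_α` of an automorphism
`α`: `U_α X(g) U_αᴴ = X(α(g))`, and `U_α Z(g) U_αᴴ = Z(β(g))` where `β` is the dual
endomorphism of `α⁻¹`. -/
theorem stmt_12 (m : ℕ) (hm : 0 < m) (d : Fin m → ℕ) [∀ i, NeZero (d i)]
    (α : (∀ i, ZMod (d i)) ≃+ (∀ i, ZMod (d i)))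
    (U : Matrix (∀ i, ZMod (d i)) (∀ i, ZMod (d i)) ℂ)
    (hU : ∀ h k, U h k = if h = α k then (1 : ℂ) else 0) :
    (∀ g, U * Xop g * Uᴴ = Xop (α g)) ∧
    ∀ β : (∀ i, ZMod (d i)) →+ (∀ i, ZMod (d i)),
      (∀ g h, chi (β g) h = chi g (α.symm h)) →
      ∀ g, U * Zop g * Uᴴ = Zop (β g) :=
  have ⟨conj_X, conj_Z⟩ := stmt_12_general α U hU
  ⟨conj_X, fun β hβ g => conj_Z g (β g) (hβ g)⟩
end
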